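/- arXiv:2206.03533 — 2 statements merged into one kernel-verified Lean document; each statement's English description precedes it below -/
import Mathlib

section
/- If (R,m) is a local ring that is not a DW-ring, then every finitely generated w-FP-projective R-module is free. -/
open CategoryTheory

universe u

noncomputable section

variable (R : Type u) [CommRing R]

/-- The Ext group `Ext^n_R(M, N)` as an `R`-module (via `ModuleCat`). -/
def extMod (M N : Type u) [AddCommGroup M] [Module R M]
    [AddCommGroup N] [Module R N] (n : ℕ) : ModuleCat R :=
  ((Ext R (ModuleCat R) n).obj (Opposite.op (ModuleCat.of R M))).obj (ModuleCat.of R N)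

/-- `J` is a Glaz–Vasconcelos ideal: finitely generated and the natural map
`R → Hom_R(J, R)` is bijective. -/
def IsGVIdeal (J : Ideal R) : Prop :=
  J.FG ∧ Function.Bijective (fun r : R => (r • J.subtype : J →ₗ[R] R))

/-- A module is GV-torsion if every element is annihilated by some GV-ideal. -/
def IsGVTorsion (M : Type u) [AddCommGroup M] [Module R M] : Prop :=
  ∀ x : M, ∃ J : Ideal R, IsGVIdeal R J ∧ ∀ j ∈ J, j • x = 0

/-- An ideal `I` is a `w`-ideal if it is `w`-closed: whenever `J x ⊆ I` for some
GV-ideal `J`, one has `x ∈ I`. -/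
def IsWIdeal (I : Ideal R) : Prop :=
  ∀ (x : R) (J : Ideal R), IsGVIdeal R J → (∀ j ∈ J, j * x ∈ I) → x ∈ I

/-- `R` is a DW-ring if every maximal ideal is a `w`-ideal. -/
def IsDWRing : Prop :=
  ∀ m : Ideal R, m.IsMaximal → IsWIdeal R m

/-- `A` is absolutely `w`-pure if `Ext^1_R(N, A)` is GV-torsion for every
finitely presented module `N`. -/
def IsAbsolutelyWPure (A : Type u) [AddCommGroup A] [Module R A] : Prop :=
  ∀ (N : Type u) [AddCommGroup N] [Module R N], Module.FinitePresentation R N →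
    IsGVTorsion R (extMod R N A 1)

/-- `M` is `w`-FP-projective if `Ext^1_R(M, A) = 0` for every absolutely
`w`-pure module `A`. -/
def IsWFPProjective (M : Type u) [AddCommGroup M] [Module R M] : Prop :=
  ∀ (A : Type u) [AddCommGroup A] [Module R A], IsAbsolutelyWPure R A →
    Subsingleton (extMod R M A 1)

end

/-!
For `R` local with residue field `k`, a finitely presented module `M` with `Ext¹(M, k) = 0` is free:
if `0 → K → Rⁿ → M → 0` is exact, every map `K → k` extends to `Rⁿ`, so by duality `k ⊗ K → k ⊗ Rⁿ`
is injective. It remains to see that a finitely generated `w`-FP-projective `M` is of this kind.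

* If the maximal ideal is not a `w`-ideal, it contains a GV-ideal `J`. As `J` annihilates `k`, it
  annihilates every `Ext¹(N, k)`, so `k` is absolutely `w`-pure and `Ext¹(M, k) = 0`.
* FP-injective modules are absolutely `w`-pure, because `R` itself is a GV-ideal. Embed `K ⧸ S` into
  an injective module `E S` for each finitely generated `S ≤ K`. The families in `∏ S, E S` that
  vanish for large `S` form an FP-injective module, so the obvious map from `K` into it extends
  to `Rⁿ`. As `Rⁿ` is finite, some single coordinate of that map vanishes: `K ⧸ S = 0`, and
  `K = S` is finitely generated.
-/

universe v

section Extension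

variable {R : Type*} [CommRing R]
variable {K Q K' Q' N : Type*} [AddCommGroup K] [Module R K] [AddCommGroup Q] [Module R Q]
  [AddCommGroup K'] [Module R K'] [AddCommGroup Q'] [Module R Q'] [AddCommGroup N] [Module R N]

theorem surjective_lcomp_of_projective_presentations [Module.Projective R Q]
    [Module.Projective R Q'] {f : K →ₗ[R] Q} {q : Q →ₗ[R] N} {f' : K' →ₗ[R] Q'} {q' : Q' →ₗ[R] N}
    (hf : Function.Injective f) (hfq : Function.Exact f q) (hq : Function.Surjective q)
    (hfq' : Function.Exact f' q') (hq' : Function.Surjective q')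
    {A : Type*} [AddCommGroup A] [Module R A] (h : Function.Surjective (LinearMap.lcomp R A f')) :
    Function.Surjective (LinearMap.lcomp R A f) := by
  intro φ
  obtain ⟨a, ha⟩ := Module.projective_lifting_property q q' hq
  obtain ⟨b, hb⟩ := Module.projective_lifting_property q' q hq'
  replace ha x : q (a x) = q' x := LinearMap.congr_fun ha x
  replace hb x : q' (b x) = q x := LinearMap.congr_fun hb x
  let a' : K' →ₗ[R] K := (a ∘ₗ f').codRestrictOfInjective f hf fun x ↦
    (hfq _).1 (by simp [ha, hfq'.apply_apply_eq_zero])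
  -- `a ∘ₗ b` induces the identity on `N`, so it differs from the identity by a map `c` into `K`.
  let c : Q →ₗ[R] K := (LinearMap.id - a ∘ₗ b).codRestrictOfInjective f hf fun x ↦
    (hfq _).1 (by simp [ha, hb])
  have hfa' x : f (a' x) = a (f' x) := LinearMap.codRestrictOfInjective_comp_apply ..
  have hfc x : f (c x) = x - a (b x) := LinearMap.codRestrictOfInjective_comp_apply ..
  obtain ⟨g, hg⟩ := h (φ ∘ₗ a')
  refine ⟨φ ∘ₗ c + g ∘ₗ b, LinearMap.ext fun x ↦ ?_⟩
  obtain ⟨y, hy⟩ := (hfq' (b (f x))).1 (by rw [hb, hfq.apply_apply_eq_zero])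
  have hgy : g (f' y) = φ (a' y) := LinearMap.congr_fun hg y
  have hcy : c (f x) + a' y = x := hf (by simp [hfa', hfc, hy])
  calc
    φ (c (f x)) + g (b (f x)) = φ (c (f x) + a' y) := by rw [← hy, hgy, map_add]
    _ = φ x := by rw [hcy]

theorem exact_lcomp_iff_surjective_lcomp_range_subtype {P₀ P₁ P₂ : Type*} [AddCommGroup P₀]
    [Module R P₀] [AddCommGroup P₁] [Module R P₁] [AddCommGroup P₂] [Module R P₂]
    {d₂ : P₂ →ₗ[R] P₁} {d₁ : P₁ →ₗ[R] P₀} (hd : Function.Exact d₂ d₁)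
    (A : Type*) [AddCommGroup A] [Module R A] :
    Function.Exact (LinearMap.lcomp R A d₁) (LinearMap.lcomp R A d₂) ↔
      Function.Surjective (LinearMap.lcomp R A d₁.range.subtype) := by
  have hr : Function.Exact (LinearMap.lcomp R A d₁.rangeRestrict) (LinearMap.lcomp R A d₂) := by
    refine LinearMap.exact_lcomp_of_exact_of_surjective A ?_ d₁.surjective_rangeRestrict
    rwa [LinearMap.exact_iff, LinearMap.ker_rangeRestrict, ← LinearMap.exact_iff]
  constructor
  · intro h φ
    obtain ⟨g, hg⟩ := (h (φ ∘ₗ d₁.rangeRestrict)).1 (hr.apply_apply_eq_zero φ)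
    exact ⟨g, LinearMap.lcomp_injective_of_surjective (S := R) _ d₁.surjective_rangeRestrict hg⟩
  · intro h φ
    rw [hr φ]
    constructor
    · rintro ⟨φ, rfl⟩
      obtain ⟨g, rfl⟩ := h φ
      exact ⟨g, rfl⟩
    · rintro ⟨g, rfl⟩
      exact ⟨g ∘ₗ d₁.range.subtype, rfl⟩

end Extension

section Ext

variable {R : Type u} [CommRing R] {N A : Type u} [AddCommGroup N] [Module R N]
  [AddCommGroup A] [Module R A]

theorem subsingleton_extMod_one_iff_exact_lcomp (P : ProjectiveResolution (ModuleCat.of R N)) :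
    Subsingleton (extMod R N A 1) ↔
      Function.Exact (LinearMap.lcomp R A (P.complex.d 1 0).hom)
        (LinearMap.lcomp R A (P.complex.d 2 1).hom) := by
  let C := P.complex.linearYonedaObj R (ModuleCat.of R A)
  have hC : Subsingleton (extMod R N A 1) ↔ (C.sc' 0 1 2).Exact := by
    rw [← C.exactAt_iff' 0 1 2 (by simp) (by simp), C.exactAt_iff_isZero_homology,
      ← (P.isoExt (R := R) 1 (ModuleCat.of R A)).isZero_iff]
    exact ModuleCat.isZero_iff_subsingleton.symm
  rw [hC, ShortComplex.ShortExact.moduleCat_exact_iff_function_exact]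
  exact Function.Exact.iff_of_ladder_linearEquiv
    (e₁ := (ModuleCat.homLinearEquiv (S := R) (M := P.complex.X 0) (N := .of R A)).symm)
    (e₂ := (ModuleCat.homLinearEquiv (S := R) (M := P.complex.X 1) (N := .of R A)).symm)
    (e₃ := (ModuleCat.homLinearEquiv (S := R) (M := P.complex.X 2) (N := .of R A)).symm) rfl rfl

theorem subsingleton_extMod_one_iff_surjective_lcomp {K Q : Type*} [AddCommGroup K] [Module R K]
    [AddCommGroup Q] [Module R Q] [Module.Projective R Q] {f : K →ₗ[R] Q} {q : Q →ₗ[R] N}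
    (hf : Function.Injective f) (hfq : Function.Exact f q) (hq : Function.Surjective q) :
    Subsingleton (extMod R N A 1) ↔ Function.Surjective (LinearMap.lcomp R A f) := by
  let P := ProjectiveResolution.of (ModuleCat.of R N)
  let p : P.complex.X 0 →ₗ[R] N := (P.π.f 0).hom
  have hp : Function.Surjective p := (ModuleCat.epi_iff_surjective (P.π.f 0)).1 inferInstance
  have hP₀ : Module.Projective R (P.complex.X 0) :=
    (IsProjective.iff_projective _).2 (P.projective 0)
  have hd : Function.Exact (P.complex.d 2 1).hom (P.complex.d 1 0).hom :=
    (ShortComplex.ShortExact.moduleCat_exact_iff_function_exact _).1 (P.exact_succ 0)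
  have hdp : Function.Exact (P.complex.d 1 0).hom p :=
    (ShortComplex.ShortExact.moduleCat_exact_iff_function_exact _).1 P.exact₀
  have hrp : Function.Exact (P.complex.d 1 0).hom.range.subtype p := by
    rwa [LinearMap.exact_iff, Submodule.range_subtype, ← LinearMap.exact_iff]
  rw [subsingleton_extMod_one_iff_exact_lcomp P, exact_lcomp_iff_surjective_lcomp_range_subtype hd]
  exact ⟨surjective_lcomp_of_projective_presentations hf hfq hq hrp hp,
    surjective_lcomp_of_projective_presentations (Submodule.injective_subtype _) hrp hp hfq hq⟩

theorem annihilator_le_annihilator_homology {ι : Type*} {c : ComplexShape ι}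
    (C : HomologicalComplex (ModuleCat R) c) (i : ι) :
    Module.annihilator R (C.X i) ≤ Module.annihilator R (C.homology i) :=
  (LinearMap.annihilator_le_of_injective (C.iCycles i).hom
    ((ModuleCat.mono_iff_injective _).1 inferInstance)).trans
  (LinearMap.annihilator_le_of_surjective (C.homologyπ i).hom
    ((ModuleCat.epi_iff_surjective _).1 inferInstance))

variable (N A) in
theorem annihilator_le_annihilator_extMod (n : ℕ) :
    Module.annihilator R A ≤ Module.annihilator R (extMod R N A n) := by
  let P := ProjectiveResolution.of (ModuleCat.of R N)
  let C := P.complex.linearYonedaObj R (ModuleCat.of R A)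
  have hC : Module.annihilator R A ≤ Module.annihilator R (C.X n) := fun r hr ↦
    Module.mem_annihilator.2 fun φ : P.complex.X n ⟶ ModuleCat.of R A ↦
      ModuleCat.hom_ext <| LinearMap.ext fun x ↦ Module.mem_annihilator.1 hr (φ.hom x)
  let e : extMod R N A n ≃ₗ[R] C.homology n := (P.isoExt n (ModuleCat.of R A)).toLinearEquiv
  rw [e.annihilator_eq]
  exact hC.trans (annihilator_le_annihilator_homology C n)

end Ext

section EventuallyZero

/-- The submodule of `∏ i, E i` of the families that vanish eventually along the filter `l`. For
the cofinite filter this is the direct sum; for `l = Filter.atTop` on the finitely generated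
submodules of a module `K` it yields the FP-injective modules that test finiteness of `K`. -/
def eventuallyZero (R : Type*) [Ring R] {ι : Type*} (l : Filter ι) (E : ι → Type*)
    [∀ i, AddCommGroup (E i)] [∀ i, Module R (E i)] : Submodule R (∀ i, E i) where
  carrier := {x | ∀ᶠ i in l, x i = 0}
  zero_mem' := .of_forall fun _ ↦ rfl
  add_mem' hx hy := by
    filter_upwards [hx, hy] with i hxi hyi
    rw [Pi.add_apply, hxi, hyi, add_zero]
  smul_mem' r x hx := by
    filter_upwards [hx] with i hxi
    rw [Pi.smul_apply, hxi, smul_zero]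

variable {R : Type*} [Ring R] {ι : Type*} {l : Filter ι} {E : ι → Type*}
  [∀ i, AddCommGroup (E i)] [∀ i, Module R (E i)]
  {K : Type*} [AddCommGroup K] [Module R K] [Module.Finite R K]

theorem eventuallyZero.eventually_forall_apply_eq_zero (f : K →ₗ[R] eventuallyZero R l E) :
    ∀ᶠ i in l, ∀ x, (f x).1 i = 0 := by
  obtain ⟨s, hs⟩ := Module.Finite.fg_top (R := R) (M := K)
  have hfs : ∀ᶠ i in l, ∀ x ∈ s, (f x).1 i = 0 :=
    (Filter.eventually_all_finset s).2 fun x _ ↦ (f x).2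
  filter_upwards [hfs] with i hi x
  let fi : K →ₗ[R] E i := LinearMap.proj i ∘ₗ (eventuallyZero R l E).subtype ∘ₗ f
  have hfi : fi = 0 := LinearMap.ext_on hs hi
  exact LinearMap.congr_fun hfi x

theorem eventuallyZero.extension_property {E : ι → Type v} [∀ i, AddCommGroup (E i)]
    [∀ i, Module R (E i)] [Small.{v} R] [∀ i, Module.Injective R (E i)]
    {Q : Type*} [AddCommGroup Q] [Module R Q] {f : K →ₗ[R] Q} (hf : Function.Injective f)
    (φ : K →ₗ[R] eventuallyZero R l E) : ∃ g : Q →ₗ[R] eventuallyZero R l E, g ∘ₗ f = φ := by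
  have extend_coord (i : ι) : ∃ g : Q →ₗ[R] E i,
      (∀ x, g (f x) = (φ x).1 i) ∧ ((∀ x, (φ x).1 i = 0) → g = 0) := by
    by_cases hi : ∀ x, (φ x).1 i = 0
    · exact ⟨0, fun x ↦ (hi x).symm, fun _ ↦ rfl⟩
    · obtain ⟨g, hg⟩ := Module.Injective.extension_property R (E i) K Q f hf
        (LinearMap.proj i ∘ₗ (eventuallyZero R l E).subtype ∘ₗ φ)
      exact ⟨g, LinearMap.congr_fun hg, fun h ↦ absurd h hi⟩
  choose g hgf hg₀ using extend_coord
  refine ⟨(LinearMap.pi g).codRestrict _ fun x ↦ ?_, ?_⟩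
  · filter_upwards [eventuallyZero.eventually_forall_apply_eq_zero φ] with i hi
    simp [hg₀ i hi]
  · ext x i
    exact hgf i x

end EventuallyZero

section FPInjective

/-- `A` is FP-injective (absolutely pure): `Ext¹(N, A) = 0` for every finitely presented `N`. -/
def IsFPInjective (R : Type u) [CommRing R] (A : Type u) [AddCommGroup A] [Module R A] : Prop :=
  ∀ (N : Type u) [AddCommGroup N] [Module R N], Module.FinitePresentation R N →
    Subsingleton (extMod R N A 1)

variable {R : Type u} [CommRing R]

theorem isFPInjective_eventuallyZero {ι : Type u} (l : Filter ι) (E : ι → Type u)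
    [∀ i, AddCommGroup (E i)] [∀ i, Module R (E i)] [∀ i, Module.Injective R (E i)] :
    IsFPInjective R (eventuallyZero R l E) := by
  intro N _ _ _
  obtain ⟨n, q, hq⟩ := Module.Finite.exists_fin' R N
  have : Module.Finite R q.ker := Module.Finite.iff_fg.2 (Module.FinitePresentation.fg_ker q hq)
  rw [subsingleton_extMod_one_iff_surjective_lcomp q.ker.injective_subtype
    q.exact_subtype_ker_map hq]
  exact eventuallyZero.extension_property q.ker.injective_subtype

theorem exists_injective_linearMap_to_injective (R : Type u) [Ring R] (X : Type u) [AddCommGroup X]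
    [Module R X] : ∃ E : ModuleCat.{u} R, Module.Injective R E ∧
      ∃ j : X →ₗ[R] E, Function.Injective j :=
  let E := Injective.under (ModuleCat.of R X)
  ⟨E, (Module.injective_iff_injective_object R E).2 (Injective.injective_under _),
    (Injective.ι (ModuleCat.of R X)).hom, (ModuleCat.mono_iff_injective _).1 inferInstance⟩

theorem finite_of_forall_isFPInjective_surjective_lcomp {K : Type u} [AddCommGroup K] [Module R K]
    {Q : Type*} [AddCommGroup Q] [Module R Q] [Module.Finite R Q] (f : K →ₗ[R] Q)
    (h : ∀ (A : Type u) [AddCommGroup A] [Module R A], IsFPInjective R A →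
      Function.Surjective (LinearMap.lcomp R A f)) : Module.Finite R K := by
  let ι := {S : Submodule R K // S.FG}
  have : Nonempty ι := ⟨⟨⊥, Submodule.fg_bot⟩⟩
  choose E hE j hj using fun S : ι ↦ exists_injective_linearMap_to_injective R (K ⧸ S.1)
  let φ : K →ₗ[R] eventuallyZero R Filter.atTop fun S ↦ E S :=
    (LinearMap.pi fun S ↦ j S ∘ₗ S.1.mkQ).codRestrict _ fun x ↦ by
      filter_upwards [Filter.eventually_ge_atTop (⟨R ∙ x, Submodule.fg_span_singleton x⟩ : ι)]
        with S hS
      have hx : S.1.mkQ x = 0 :=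
        (Submodule.Quotient.mk_eq_zero S.1).2 (hS (Submodule.mem_span_singleton_self x))
      rw [LinearMap.pi_apply, LinearMap.comp_apply, hx, map_zero]
  obtain ⟨g, hg⟩ := h _ (isFPInjective_eventuallyZero _ _) φ
  obtain ⟨S, hS⟩ := (eventuallyZero.eventually_forall_apply_eq_zero g).exists
  have hS_top : S.1 = ⊤ := by
    refine eq_top_iff.2 fun x _ ↦ (Submodule.Quotient.mk_eq_zero S.1).1 (hj S ?_)
    calc
      j S (S.1.mkQ x) = (g (f x)).1 S := congrArg (fun ψ ↦ (ψ x).1 S) hg.symm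
      _ = j S 0 := by rw [hS, map_zero]
  exact ⟨hS_top ▸ S.2⟩

theorem finitePresentation_of_forall_isFPInjective_subsingleton_extMod {M : Type u} [AddCommGroup M]
    [Module R M] [Module.Finite R M]
    (h : ∀ (A : Type u) [AddCommGroup A] [Module R A], IsFPInjective R A →
      Subsingleton (extMod R M A 1)) : Module.FinitePresentation R M := by
  obtain ⟨n, q, hq⟩ := Module.Finite.exists_fin' R M
  refine Module.finitePresentation_of_surjective q hq (Module.Finite.iff_fg.1 ?_)
  refine finite_of_forall_isFPInjective_surjective_lcomp q.ker.subtype fun A _ _ hA ↦ ?_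
  exact (subsingleton_extMod_one_iff_surjective_lcomp q.ker.injective_subtype
    q.exact_subtype_ker_map hq).1 (h A hA)

end FPInjective

section GVIdeal

variable {R : Type u} [CommRing R]

variable (R) in
theorem isGVIdeal_top : IsGVIdeal R ⊤ := by
  let one : (⊤ : Ideal R) := ⟨1, Submodule.mem_top⟩
  refine ⟨Ideal.fg_top R, fun r s h ↦ ?_, fun φ ↦ ⟨φ one, LinearMap.ext fun x ↦ ?_⟩⟩
  · simpa [one] using LinearMap.congr_fun h one
  · calc
      φ one * x = φ (x.1 • one) := by rw [map_smul, smul_eq_mul, mul_comm]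
      _ = φ x := by congr; simp [one]

theorem exists_isGVIdeal_le_of_not_isWIdeal {p : Ideal R} (hp : p.IsPrime)
    (hpw : ¬ IsWIdeal R p) : ∃ J, IsGVIdeal R J ∧ J ≤ p := by
  simp only [IsWIdeal, not_forall] at hpw
  obtain ⟨x, J, hJ, hJx, hx⟩ := hpw
  exact ⟨J, hJ, fun r hr ↦ (hp.mem_or_mem (hJx r hr)).resolve_right hx⟩

variable {A : Type u} [AddCommGroup A] [Module R A]

theorem IsFPInjective.isAbsolutelyWPure (hA : IsFPInjective R A) : IsAbsolutelyWPure R A := by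
  intro N _ _ hN x
  have := hA N hN
  exact ⟨⊤, isGVIdeal_top R, fun _ _ ↦ Subsingleton.elim _ _⟩

theorem IsGVIdeal.isAbsolutelyWPure_of_le_annihilator {J : Ideal R} (hJ : IsGVIdeal R J)
    (hJA : J ≤ Module.annihilator R A) : IsAbsolutelyWPure R A := fun N _ _ _ x ↦
  ⟨J, hJ, fun _ hr ↦
    Module.mem_annihilator.1 (annihilator_le_annihilator_extMod N A 1 (hJA hr)) x⟩

end GVIdeal

section ResidueField

theorem injective_baseChange_of_surjective_lcomp {R : Type*} [CommRing R] (k : Type*) [Field k]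
    [Algebra R k] {K Q : Type*} [AddCommGroup K] [Module R K] [AddCommGroup Q] [Module R Q]
    {f : K →ₗ[R] Q} (hf : Function.Surjective (LinearMap.lcomp R k f)) :
    Function.Injective (f.baseChange k) := by
  rw [← LinearMap.dualMap_surjective_iff]
  intro φ
  obtain ⟨g, hg⟩ := hf (φ.restrictScalars R ∘ₗ TensorProduct.mk R k K 1)
  refine ⟨g.liftBaseChange k, TensorProduct.AlgebraTensorModule.curry_injective ?_⟩
  ext x
  simpa using LinearMap.congr_fun hg x

theorem free_of_subsingleton_extMod_residueField {R : Type u} [CommRing R] [IsLocalRing R]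
    {M : Type u} [AddCommGroup M] [Module R M] [Module.FinitePresentation R M]
    (h : Subsingleton (extMod R M (IsLocalRing.ResidueField R) 1)) : Module.Free R M := by
  obtain ⟨n, q, hq⟩ := Module.Finite.exists_fin' R M
  have : Module.Finite R q.ker := Module.Finite.iff_fg.2 (Module.FinitePresentation.fg_ker q hq)
  have hext := (subsingleton_extMod_one_iff_surjective_lcomp q.ker.injective_subtype
    q.exact_subtype_ker_map hq).1 h
  exact Module.free_of_lTensor_residueField_injective q.ker.subtype q hq q.exact_subtype_ker_map
    (injective_baseChange_of_surjective_lcomp _ hext)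

end ResidueField

/-- Over a local ring which is not a DW-ring, every finitely generated
`w`-FP-projective module is free. -/
theorem free_of_wFPProjective_of_local_not_dw (R : Type u) [CommRing R] [IsLocalRing R]
    (hR : ¬ IsDWRing R)
    (M : Type u) [AddCommGroup M] [Module R M] [Module.Finite R M]
    (hM : IsWFPProjective R M) : Module.Free R M := by
  have : Module.FinitePresentation R M :=
    finitePresentation_of_forall_isFPInjective_subsingleton_extMod
      fun A _ _ hA ↦ hM A hA.isAbsolutelyWPure
  simp only [IsDWRing, not_forall] at hR
  obtain ⟨m, hm, hmw⟩ := hR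
  obtain ⟨J, hJ, hJm⟩ := exists_isGVIdeal_le_of_not_isWIdeal hm.isPrime hmw
  have hk : IsAbsolutelyWPure R (IsLocalRing.ResidueField R) := by
    refine hJ.isAbsolutelyWPure_of_le_annihilator ?_
    exact (hJm.trans (IsLocalRing.eq_maximalIdeal hm).le).trans Ideal.annihilator_quotient.ge
  exact free_of_subsingleton_extMod_residueField (hM _ hk)
end

section
/- Let R be a coherent ring. An R-module M is w-FP-projective if and only if Ext^{n+1}_R(M,A)=0 for every absolutely w-pure module A and every integer n ≥ 0. -/
open CategoryTheory

universe u

def IsCoherentRing (R : Type u) [CommRing R] : Prop :=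
  ∀ I : Ideal R, I.FG → Module.FinitePresentation R I

/-!
Embed an absolutely `w`-pure `A` into an injective `E` with cokernel `C`. Since
`Ext^{n+1}(M, C) → Ext^{n+2}(M, A)` is surjective, the vanishing of `Ext^{n+1}(M, -)` on absolutely
`w`-pure modules propagates upwards in `n`, provided that `C` is again absolutely `w`-pure. For `N`
finitely presented, `Ext^1(N, C)` embeds into `Ext^2(N, A)`, which is a quotient of `Ext^1(K, A)`
for the kernel `K` of a surjection `R^n → N`. Coherence of `R` makes `K` finitely presented, so
`Ext^1(K, A)` is GV-torsion, and this property passes to quotients and submodules.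
-/

universe v w

section ExtComparison

variable {R : Type*} [Ring R] {C : Type*} [Category.{v} C] [Abelian C] [Linear R C]
  [HasExt.{w} C] {X : C} (P : ProjectiveResolution X)

lemma smul_extMk {Y : C} {n : ℕ} (r : R) (f : P.complex.X n ⟶ Y) (m : ℕ) (hm : n + 1 = m)
    (hf : P.complex.d m n ≫ f = 0) :
    r • P.extMk f m hm hf = P.extMk (r • f) m hm (by simp [hf]) := by
  simp only [Abelian.Ext.smul_eq_comp_mk₀, P.extMk_comp_mk₀, Linear.comp_smul, Category.comp_id]

variable (R) in
/-- The linear map sending a degree `n + 1` cocycle of `Hom(P, Y)`, for a projective resolution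
`P` of `X`, to its class in the derived-category Ext module. -/
noncomputable def extClassOfCocycle (Y : C) (n : ℕ) :
    LinearMap.ker ((P.complex.linearYonedaObj R Y).sc' n (n + 1) (n + 2)).g.hom →ₗ[R]
      Abelian.Ext X Y (n + 1) where
  toFun f := P.extMk f.1 (n + 2) rfl f.2
  map_add' _ _ := (P.add_extMk _ _ _ _ _ _).symm
  map_smul' r _ := (smul_extMk P r _ _ _ _).symm

lemma extClassOfCocycle_surjective (Y : C) (n : ℕ) :
    Function.Surjective (extClassOfCocycle R P Y n) := fun x ↦
  let ⟨f, hf, hx⟩ := P.extMk_surjective x (n + 2) rfl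
  ⟨⟨f, hf⟩, hx⟩

lemma ker_extClassOfCocycle (Y : C) (n : ℕ) :
    LinearMap.ker (extClassOfCocycle R P Y n) =
      LinearMap.range
        ((P.complex.linearYonedaObj R Y).sc' n (n + 1) (n + 2)).moduleCatToCycles := by
  ext f
  refine (P.extMk_eq_zero_iff f.1 (n + 2) rfl f.2 n rfl).trans ?_
  simp only [LinearMap.mem_range, Subtype.ext_iff]
  rfl

variable (R) in
/-- The linear comparison in positive degrees between Mathlib's two models of Ext: the derived
functor `Ext R C`, and `Abelian.Ext`, which carries Yoneda products and long exact sequences. -/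
noncomputable def extLinearEquiv [EnoughProjectives C] (X Y : C) (n : ℕ) :
    ((Ext R C (n + 1)).obj (Opposite.op X)).obj Y ≃ₗ[R] Abelian.Ext X Y (n + 1) :=
  let P := projectiveResolution X
  let K := P.complex.linearYonedaObj R Y
  (P.isoExt (n + 1) Y ≪≫
      ShortComplex.homologyMapIso (K.isoSc' n (n + 1) (n + 2) (by simp) (by simp)) ≪≫
      (K.sc' n (n + 1) (n + 2)).moduleCatHomologyIso).toLinearEquiv ≪≫ₗ
    Submodule.quotEquivOfEq _ _ (ker_extClassOfCocycle P Y n).symm ≪≫ₗ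
    (extClassOfCocycle R P Y n).quotKerEquivOfSurjective (extClassOfCocycle_surjective P Y n)

end ExtComparison

lemma postcomp_extClass_injective_of_injective_X₂ {C : Type*} [Category.{v} C] [Abelian C]
    [HasExt.{w} C] (X : C) {S : ShortComplex C} (hS : S.ShortExact) [Injective S.X₂] {n m : ℕ}
    (h : n + 1 + 1 = m) : Function.Injective (hS.extClass.postcomp X h) := by
  refine (injective_iff_map_eq_zero _).mpr fun x hx ↦ ?_
  obtain ⟨y, rfl⟩ := Abelian.Ext.covariant_sequence_exact₃ X hS x h hx
  rw [Abelian.Ext.eq_zero_of_injective y, Abelian.Ext.zero_comp]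

/-- A module is pseudo-coherent (in Bourbaki's sense) if all its finitely generated submodules
are finitely presented; a coherent ring is one that is pseudo-coherent as a module over itself. -/
def IsPseudocoherent (R M : Type*) [Ring R] [AddCommGroup M] [Module R M] : Prop :=
  ∀ N : Submodule R M, N.FG → Module.FinitePresentation R N

namespace IsPseudocoherent

variable {R M N : Type*} [Ring R] [AddCommGroup M] [Module R M] [AddCommGroup N] [Module R N]

lemma finitePresentation_of_injective (hM : IsPseudocoherent R M) [Module.Finite R N]
    (f : N →ₗ[R] M) (hf : Function.Injective f) : Module.FinitePresentation R N :=
  have := hM (LinearMap.range f) (Module.Finite.iff_fg.mp inferInstance)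
  .of_equiv (LinearEquiv.ofInjective f hf).symm

lemma of_injective (hM : IsPseudocoherent R M) {f : N →ₗ[R] M} (hf : Function.Injective f) :
    IsPseudocoherent R N := fun K hK ↦
  have := Module.Finite.iff_fg.mpr hK
  hM.finitePresentation_of_injective (f ∘ₗ K.subtype) (hf.comp K.injective_subtype)

lemma prod (hM : IsPseudocoherent R M) (hN : IsPseudocoherent R N) :
    IsPseudocoherent R (M × N) := by
  intro K hK
  have : Module.Finite R K := Module.Finite.iff_fg.mpr hK
  let p : K →ₗ[R] N := LinearMap.snd R M N ∘ₗ K.subtype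
  have : Module.FinitePresentation R (LinearMap.range p) :=
    hN _ (Module.Finite.iff_fg.mp inferInstance)
  have : Module.Finite R (LinearMap.ker p) := by
    rw [Module.Finite.iff_fg, ← p.ker_rangeRestrict]
    exact Module.FinitePresentation.fg_ker _ p.surjective_rangeRestrict
  let q : LinearMap.ker p →ₗ[R] M :=
    LinearMap.fst R M N ∘ₗ K.subtype ∘ₗ (LinearMap.ker p).subtype
  have hq : Function.Injective q := by
    rw [injective_iff_map_eq_zero]
    exact fun x hx ↦ Subtype.ext (Subtype.ext (Prod.ext hx x.2))
  have : Module.FinitePresentation R (LinearMap.ker p.rangeRestrict) := by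
    rw [p.ker_rangeRestrict]
    exact hM.finitePresentation_of_injective (N := LinearMap.ker p) q hq
  exact Module.finitePresentation_of_ker p.rangeRestrict p.surjective_rangeRestrict

lemma pi {ι : Type*} [Finite ι] {M : ι → Type*} [∀ i, AddCommGroup (M i)]
    [∀ i, Module R (M i)] (hM : ∀ i, IsPseudocoherent R (M i)) :
    IsPseudocoherent R (∀ i, M i) := by
  refine Module.pi_induction' R (motive := fun N _ _ ↦ IsPseudocoherent R N)
    (motive' := fun N _ _ ↦ IsPseudocoherent R N) ?_ ?_ ?_ ?_ M hM
  · exact fun e hN ↦ hN.of_injective e.symm.injective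
  · exact fun e hN ↦ hN.of_injective e.symm.injective
  · exact fun _ _ ↦ inferInstance
  · exact fun hN hN' ↦ hN.prod hN'

end IsPseudocoherent

section AbsolutelyWPure

variable {R : Type u} [CommRing R]

namespace IsGVTorsion

variable {M N : Type u} [AddCommGroup M] [Module R M] [AddCommGroup N] [Module R N]

lemma of_injective (hN : IsGVTorsion R N) {f : M →ₗ[R] N} (hf : Function.Injective f) :
    IsGVTorsion R M := fun x ↦
  let ⟨J, hJ, hJx⟩ := hN (f x)
  ⟨J, hJ, fun j hj ↦ hf (by rw [map_smul, hJx j hj, map_zero])⟩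

lemma of_surjective (hM : IsGVTorsion R M) {f : M →ₗ[R] N} (hf : Function.Surjective f) :
    IsGVTorsion R N := by
  intro y
  obtain ⟨x, rfl⟩ := hf y
  obtain ⟨J, hJ, hJx⟩ := hM x
  exact ⟨J, hJ, fun j hj ↦ by rw [← map_smul, hJx j hj, map_zero]⟩

end IsGVTorsion

variable (R) in
lemma isAbsolutelyWPure_iff_isGVTorsion_abelianExt (A : Type u) [AddCommGroup A] [Module R A] :
    IsAbsolutelyWPure R A ↔ ∀ (N : Type u) [AddCommGroup N] [Module R N],
      Module.FinitePresentation R N →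
        IsGVTorsion R (Abelian.Ext (ModuleCat.of R N) (ModuleCat.of R A) 1) :=
  forall₄_congr fun N _ _ _ ↦
    let e := extLinearEquiv R (ModuleCat.of R N) (ModuleCat.of R A) 0
    ⟨fun h ↦ h.of_injective (f := e.symm.toLinearMap) e.symm.injective,
      fun h ↦ h.of_injective (f := e.toLinearMap) e.injective⟩

lemma IsCoherentRing.exists_finitePresentation_ker (hR : IsCoherentRing R) (N : Type*)
    [AddCommGroup N] [Module R N] [Module.FinitePresentation R N] :
    ∃ (n : ℕ) (p : (Fin n → R) →ₗ[R] N), Function.Surjective p ∧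
      Module.FinitePresentation R (LinearMap.ker p) := by
  obtain ⟨n, p, hp⟩ := Module.Finite.exists_fin' R N
  exact ⟨n, p, hp, IsPseudocoherent.pi (fun _ ↦ hR) _ (Module.FinitePresentation.fg_ker p hp)⟩

lemma IsAbsolutelyWPure.isGVTorsion_ext_two {A : Type u} [AddCommGroup A] [Module R A]
    (hA : IsAbsolutelyWPure R A) (hR : IsCoherentRing R) (N : Type u) [AddCommGroup N]
    [Module R N] [Module.FinitePresentation R N] :
    IsGVTorsion R (Abelian.Ext (ModuleCat.of R N) (ModuleCat.of R A) 2) := by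
  obtain ⟨n, p, hp, hK⟩ := hR.exists_finitePresentation_ker N
  have hS := LinearMap.shortExact_shortComplexKer hp
  have ext_one := (isAbsolutelyWPure_iff_isGVTorsion_abelianExt R A).mp hA _ hK
  exact ext_one.of_surjective
    (f := hS.extClass.precompOfLinear R (ModuleCat.of R A) (add_comm 1 1))
    (precomp_extClass_surjective_of_projective_X₂ _ hS 1)

lemma IsAbsolutelyWPure.X₃_of_shortExact {S : ShortComplex (ModuleCat.{u} R)}
    (hA : IsAbsolutelyWPure R S.X₁) (hR : IsCoherentRing R) (hS : S.ShortExact)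
    [Injective S.X₂] : IsAbsolutelyWPure R S.X₃ :=
  (isAbsolutelyWPure_iff_isGVTorsion_abelianExt R S.X₃).mpr fun N _ _ _ ↦
    (hA.isGVTorsion_ext_two hR N).of_injective
      (f := hS.extClass.postcompOfLinear R (ModuleCat.of R N) rfl)
      (postcomp_extClass_injective_of_injective_X₂ _ hS rfl)

lemma subsingleton_extMod_succ_of_shortExact (M : Type u) [AddCommGroup M] [Module R M]
    {S : ShortComplex (ModuleCat.{u} R)} (hS : S.ShortExact) [Injective S.X₂] (n : ℕ)
    (h : Subsingleton (extMod R M S.X₃ (n + 1))) : Subsingleton (extMod R M S.X₁ (n + 2)) := by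
  have : Subsingleton (Abelian.Ext (ModuleCat.of R M) S.X₃ (n + 1)) :=
    (extLinearEquiv R (ModuleCat.of R M) S.X₃ n).toEquiv.subsingleton_congr.mp h
  have := (postcomp_extClass_surjective_of_projective_X₂ hS (ModuleCat.of R M) (n + 1)).subsingleton
  exact (extLinearEquiv R (ModuleCat.of R M) S.X₁ (n + 1)).toEquiv.subsingleton

end AbsolutelyWPure

/-- Over a coherent ring, `M` is `w`-FP-projective iff `Ext^{n+1}_R(M, A) = 0` for
every absolutely `w`-pure module `A` and every `n ≥ 0`. -/
theorem isWFPProjective_iff_ext_vanishing (R : Type u) [CommRing R]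
    (hR : IsCoherentRing R) (M : Type u) [AddCommGroup M] [Module R M] :
    IsWFPProjective R M ↔
      ∀ (A : Type u) [AddCommGroup A] [Module R A], IsAbsolutelyWPure R A →
        ∀ n : ℕ, Subsingleton (extMod R M A (n + 1)) := by
  refine ⟨fun hM A _ _ hA n ↦ ?_, fun h A _ _ hA ↦ h A hA 0⟩
  induction n generalizing A with
  | zero => exact hM A hA
  | succ n ih =>
    let S : ShortComplex (ModuleCat.{u} R) :=
      .mk _ _ (Limits.cokernel.condition (Injective.ι (ModuleCat.of R A)))
    have hS : S.ShortExact := { exact := ShortComplex.cokernelSequence_exact _ }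
    have hC : IsAbsolutelyWPure R S.X₃ := hA.X₃_of_shortExact hR hS
    exact subsingleton_extMod_succ_of_shortExact M hS n (ih S.X₃ _ _ hC)
end
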